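/- arXiv:1512.05292 — 5 statements merged into one kernel-verified Lean document; each statement's English description precedes it below -/
import Mathlib

section
/- Let N ≥ 2. The matrix B = S_N * T_N is diagonalizable over ℝ with real eigenvalues: there exist an invertible real N×N matrix Q and a vector d ∈ ℝ^N such that S_N * T_N = Q * diagonal(d) * Q⁻¹. -/
open Matrix

/-- The `N × N` tridiagonal matrix with `2` on the diagonal and `-1` on the
sub- and superdiagonals. -/
noncomputable def Tmat (N : ℕ) : Matrix (Fin N) (Fin N) ℝ :=
  Matrix.of fun i j =>
    if i = j then 2
    else if i.val + 1 = j.val ∨ j.val + 1 = i.val then -1 else 0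

/-- The `N × N` matrix equal to `Tmat N` except that the `(1,1)` and `(N,N)` entries
are `1` instead of `2`. -/
noncomputable def Smat (N : ℕ) : Matrix (Fin N) (Fin N) ℝ :=
  Matrix.of fun i j =>
    if i = j then (if i.val = 0 ∨ i.val = N - 1 then 1 else 2)
    else if i.val + 1 = j.val ∨ j.val + 1 = i.val then -1 else 0

/-- Cholesky factor of `Tmat N`. -/
noncomputable def Cmat (N : ℕ) : Matrix (Fin N) (Fin N) ℝ :=
  Matrix.of fun k i =>
    (if k = i then √((k.val + 2 : ℝ) / (k.val + 1)) else 0)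
    + (if k.val + 1 = i.val then -√((k.val + 1 : ℝ) / (k.val + 2)) else 0)

lemma aux_sq1 (n : ℕ) : √((n + 2 : ℝ) / (n + 1)) * √((n + 2 : ℝ) / (n + 1)) = (n + 2 : ℝ) / (n + 1) :=
  Real.mul_self_sqrt (by positivity)

lemma aux_sq2 (n : ℕ) : √((n + 1 : ℝ) / (n + 2)) * √((n + 1 : ℝ) / (n + 2)) = (n + 1 : ℝ) / (n + 2) :=
  Real.mul_self_sqrt (by positivity)

lemma aux_sq3 (n : ℕ) : √((n + 2 : ℝ) / (n + 1)) * √((n + 1 : ℝ) / (n + 2)) = 1 := by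
  rw [← Real.sqrt_mul (by positivity)]
  have : ((n + 2 : ℝ) / (n + 1)) * ((n + 1 : ℝ) / (n + 2)) = 1 := by field_simp
  rw [this, Real.sqrt_one]

lemma Cmat_mul (N : ℕ) : (Cmat N)ᵀ * Cmat N = Tmat N := by
  ext i j
  obtain ⟨i, hi⟩ := i
  obtain ⟨j, hj⟩ := j
  rw [Matrix.mul_apply]
  simp only [Matrix.transpose_apply]
  have h1 : ∀ k : Fin N, Cmat N k ⟨i, hi⟩ * Cmat N k ⟨j, hj⟩ =
      (if k = ⟨i, hi⟩ then √((i + 2 : ℝ) / (i + 1)) * Cmat N ⟨i, hi⟩ ⟨j, hj⟩ else 0)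
      + (if k.val + 1 = i then -√((k.val + 1 : ℝ) / (k.val + 2)) * Cmat N k ⟨j, hj⟩ else 0) := by
    intro k
    conv_lhs => rw [show Cmat N k ⟨i, hi⟩ = (if k = ⟨i, hi⟩ then √((k.val + 2 : ℝ) / (k.val + 1)) else 0)
      + (if k.val + 1 = i then -√((k.val + 1 : ℝ) / (k.val + 2)) else 0) from rfl]
    rw [add_mul, ite_mul, ite_mul, zero_mul]
    congr 1
    split_ifs with h
    · subst h; rfl
    · rfl
  rw [Finset.sum_congr rfl (fun k _ => h1 k), Finset.sum_add_distrib, Finset.sum_ite_eq' Finset.univ]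
  simp only [Finset.mem_univ, if_true]
  have h3 := aux_sq3 i
  have h1' := aux_sq1 i
  rcases i with _ | m
  · simp only [Nat.succ_ne_zero, if_false, Finset.sum_const_zero, add_zero]
    simp only [Cmat, Tmat, Matrix.of_apply, Fin.mk.injEq]
    split_ifs <;> first | omega | skip
    · rw [add_zero, h1']; norm_num
    all_goals simp_all
  · have e : ∀ k : Fin N, (k.val + 1 = m + 1) ↔ k = ⟨m, by omega⟩ := by
      intro k; simp [Fin.ext_iff]
    simp only [e]
    rw [Finset.sum_ite_eq' Finset.univ]
    have h2 := aux_sq2 m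
    have h4 := aux_sq3 m
    simp only [Finset.mem_univ, if_true, Cmat, Tmat, Matrix.of_apply, Fin.mk.injEq]
    split_ifs <;> first | omega | skip
    · have : ((m + 1 : ℕ) + 2 : ℝ) / ((m + 1 : ℕ) + 1) + (m + 1 : ℝ) / (m + 2) = 2 := by
        push_cast; field_simp; ring
      linarith
    all_goals linarith

lemma Cmat_det (N : ℕ) : IsUnit (Cmat N).det := by
  rw [Matrix.det_of_upperTriangular, isUnit_iff_ne_zero, Finset.prod_ne_zero_iff]
  · intro i _
    have : Cmat N i i = √((i.val + 2 : ℝ) / (i.val + 1)) := by simp [Cmat]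
    rw [this]
    positivity
  · intro i j hij
    have h : j < i := hij
    have h' : j.val < i.val := h
    simp only [Cmat, Matrix.of_apply]
    rw [if_neg (by intro h; subst h; omega), if_neg (by omega), add_zero]

lemma Smat_symm (N : ℕ) : (Smat N)ᵀ = Smat N := by
  ext i j
  simp only [Smat, Matrix.transpose_apply, Matrix.of_apply]
  by_cases h : i = j
  · subst h; rfl
  · rw [if_neg h, if_neg (Ne.symm h)]
    simp only [or_comm]

/-- `S_N * T_N` is diagonalizable over `ℝ` with real eigenvalues. -/
theorem SmatTmat_diagonalizable (N : ℕ) (hN : 2 ≤ N) :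
    ∃ (Q : Matrix (Fin N) (Fin N) ℝ) (d : Fin N → ℝ),
      IsUnit Q.det ∧ Smat N * Tmat N = Q * Matrix.diagonal d * Q⁻¹ := by
  have hC := Cmat_det N
  have hA : (Cmat N * Smat N * (Cmat N)ᵀ).IsHermitian := by
    rw [Matrix.IsHermitian, Matrix.conjTranspose_eq_transpose_of_trivial]
    simp [Matrix.transpose_mul, Smat_symm, Matrix.mul_assoc]
  have hs := hA.spectral_theorem
  rw [Unitary.conjStarAlgAut_apply] at hs
  set U : Matrix (Fin N) (Fin N) ℝ := (hA.eigenvectorUnitary : Matrix (Fin N) (Fin N) ℝ) with hU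
  have hUU : U * star U = 1 := Unitary.coe_mul_star_self _
  have hUinv : U⁻¹ = star U := Matrix.inv_eq_right_inv hUU
  have hUd : IsUnit U.det := by
    exact Matrix.isUnit_det_of_right_inverse hUU
  refine ⟨(Cmat N)⁻¹ * U, hA.eigenvalues, ?_, ?_⟩
  · rw [Matrix.det_mul]
    exact (Matrix.isUnit_nonsing_inv_det _ hC).mul hUd
  · rw [Matrix.mul_inv_rev, Matrix.nonsing_inv_nonsing_inv _ hC, hUinv]
    have : (Cmat N)⁻¹ * U * Matrix.diagonal hA.eigenvalues * (star U * Cmat N)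
        = (Cmat N)⁻¹ * (U * Matrix.diagonal hA.eigenvalues * star U) * Cmat N := by
      simp only [Matrix.mul_assoc]
    rw [this]
    have hs' : Cmat N * Smat N * (Cmat N)ᵀ = U * Matrix.diagonal hA.eigenvalues * star U := hs
    rw [← hs', ← Cmat_mul]
    simp only [Matrix.mul_assoc]
    rw [Matrix.nonsing_inv_mul_cancel_left _ _ hC]
end

section
/- Let N ≥ 2 and let e ∈ ℝ^N be the all-ones vector. Then T_N is invertible, and the vector v₀ = T_N⁻¹ e satisfies (S_N * T_N) v₀ = 0; i.e., v₀ is a right eigenvector of S_N T_N for the eigenvalue 0. -/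
open Matrix

theorem tri_row (N : ℕ) (d : ℝ) (g : ℕ → ℝ) (i : ℕ) (hi : i < N) :
    (∑ j ∈ Finset.range N,
      (if i = j then d else if i + 1 = j ∨ j + 1 = i then -1 else 0) * g j)
    = d * g i - (if i + 1 < N then g (i + 1) else 0) - (if 1 ≤ i then g (i - 1) else 0) := by
  have h : ∀ j ∈ Finset.range N,
      (if i = j then d else if i + 1 = j ∨ j + 1 = i then -1 else 0) * g j
      = (if i = j then d * g j else 0) - (if i + 1 = j then g j else 0)
        - (if i - 1 = j then (if 1 ≤ i then g j else 0) else 0) := by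
    intro j _
    split_ifs <;> first | omega | ring
  rw [Finset.sum_congr rfl h, Finset.sum_sub_distrib, Finset.sum_sub_distrib,
    Finset.sum_ite_eq, Finset.sum_ite_eq, Finset.sum_ite_eq]
  have h1 : i - 1 < N := by omega
  simp [hi, h1]

theorem Tmat_ker (N : ℕ) (v : Fin N → ℝ) (hv : (Tmat N).mulVec v = 0) : v = 0 := by
  let w : ℕ → ℝ := fun k => if h : 1 ≤ k ∧ k ≤ N then v ⟨k - 1, by omega⟩ else 0
  have hw0 : w 0 = 0 := by simp [w]
  have hwN : w (N + 1) = 0 := by simp [w]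
  have hwv : ∀ j : Fin N, w (j.val + 1) = v j := by
    intro j
    have : j.val + 1 ≤ N := j.2
    simp [w]
  have hrec : ∀ i, i < N → w (i + 2) = 2 * w (i + 1) - w i := by
    intro i hi
    have h := congrFun hv ⟨i, hi⟩
    have h2 := tri_row N 2 (fun j => w (j + 1)) i hi
    rw [← Fin.sum_univ_eq_sum_range (fun j =>
      (if i = j then (2 : ℝ) else if i + 1 = j ∨ j + 1 = i then -1 else 0) * w (j + 1))] at h2
    simp only [Matrix.mulVec, dotProduct, Tmat, Matrix.of_apply, Fin.ext_iff, Pi.zero_apply] at h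
    simp only [hwv] at h2
    rw [h] at h2
    have e1 : (if i + 1 < N then w (i + 1 + 1) else 0) = w (i + 2) := by
      split_ifs with hh
      · rfl
      · have : i + 2 = N + 1 := by omega
        rw [this, hwN]
    have e2 : (if 1 ≤ i then w (i - 1 + 1) else 0) = w i := by
      split_ifs with hh
      · rw [Nat.sub_add_cancel hh]
      · have : i = 0 := by omega
        rw [this, hw0]
    rw [e1, e2] at h2
    linarith
  have hlin : ∀ k, k ≤ N → w k = k * w 1 ∧ w (k + 1) = (k + 1) * w 1 := by
    intro k
    induction k with
    | zero => intro _; simp [hw0]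
    | succ k ih =>
      intro hk
      obtain ⟨a, b⟩ := ih (by omega)
      have := hrec k (by omega)
      push_cast
      refine ⟨b, ?_⟩
      rw [this, a, b]; ring
  have h1 : w 1 = 0 := by
    have := (hlin N le_rfl).2
    rw [hwN] at this
    have hp : (N : ℝ) + 1 ≠ 0 := by positivity
    rcases mul_eq_zero.1 this.symm with h | h
    · exact absurd h hp
    · exact h
  funext j
  rw [← hwv j, (hlin j.val j.2.le).2, h1]; simp

theorem Smat_one (N : ℕ) (hN : 2 ≤ N) : (Smat N).mulVec (fun _ => (1 : ℝ)) = 0 := by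
  funext ⟨i, hi⟩
  have h2 := tri_row N (if i = 0 ∨ i = N - 1 then 1 else 2) (fun _ => 1) i hi
  rw [← Fin.sum_univ_eq_sum_range (fun j =>
      (if i = j then (if i = 0 ∨ i = N - 1 then (1 : ℝ) else 2)
        else if i + 1 = j ∨ j + 1 = i then -1 else 0) * 1)] at h2
  simp only [Matrix.mulVec, dotProduct, Smat, Matrix.of_apply, Fin.ext_iff, Pi.zero_apply]
  rw [h2]
  split_ifs <;> first | omega | norm_num

/-- `T_N` is invertible and `v₀ = T_N⁻¹ e` is a right eigenvector of `S_N * T_N`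
for the eigenvalue `0`. -/
theorem SmatTmat_right_kernel (N : ℕ) (hN : 2 ≤ N) :
    IsUnit (Tmat N).det ∧
      (Smat N * Tmat N).mulVec ((Tmat N)⁻¹.mulVec (fun _ => (1 : ℝ))) = 0 := by
  have hu : IsUnit (Tmat N).det := by
    rw [isUnit_iff_ne_zero]
    intro h0
    obtain ⟨v, hv, hv0⟩ := Matrix.exists_mulVec_eq_zero_iff.2 h0
    exact hv (Tmat_ker N v hv0)
  refine ⟨hu, ?_⟩
  rw [Matrix.mulVec_mulVec, Matrix.mul_assoc, Matrix.mul_nonsing_inv _ hu, Matrix.mul_one]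
  exact Smat_one N hN
end

section
/- Let N ≥ 2 and let e ∈ ℝ^N be the all-ones vector. For every y ∈ ℝ^N with eᵀy = 0 (i.e., the entries of y sum to 0), there exists a unique x ∈ ℝ^N such that eᵀx = 0 and (S_N * T_N) x = y. -/
open Matrix

noncomputable def uu {N : ℕ} (x : Fin N → ℝ) (k : ℕ) : ℝ :=
  ∑ j : Fin N, if j.val + 1 = k then x j else 0

lemma uu_zero {N : ℕ} (x : Fin N → ℝ) : uu x 0 = 0 := by simp [uu]

lemma uu_last {N : ℕ} (x : Fin N → ℝ) : uu x (N + 1) = 0 := by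
  unfold uu
  apply Finset.sum_eq_zero
  intro j _
  rw [if_neg]
  have := j.2
  omega

lemma uu_succ {N : ℕ} (x : Fin N → ℝ) (i : Fin N) : uu x (i.val + 1) = x i := by
  unfold uu
  rw [Finset.sum_eq_single i]
  · simp
  · intro j _ hj
    rw [if_neg]
    intro h
    exact hj (Fin.ext (by omega))
  · simp

lemma Tmat_row {N : ℕ} (x : Fin N → ℝ) (i : Fin N) :
    (Tmat N *ᵥ x) i = 2 * uu x (i.val + 1) - uu x i.val - uu x (i.val + 2) := by
  unfold uu
  rw [Finset.mul_sum, ← Finset.sum_sub_distrib, ← Finset.sum_sub_distrib]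
  simp only [Matrix.mulVec, dotProduct, Tmat, Matrix.of_apply, Fin.ext_iff]
  apply Finset.sum_congr rfl
  intro j _
  grind

lemma Smat_row {N : ℕ} (x : Fin N → ℝ) (i : Fin N) :
    (Smat N *ᵥ x) i = 2 * uu x (i.val + 1) - uu x i.val - uu x (i.val + 2)
      - if i.val = 0 ∨ i.val = N - 1 then uu x (i.val + 1) else 0 := by
  rw [← Tmat_row]
  have h : (if i.val = 0 ∨ i.val = N - 1 then uu x (i.val + 1) else 0)
     = ∑ j : Fin N, if i.val = 0 ∨ i.val = N - 1 then
        (if j.val + 1 = i.val + 1 then x j else 0) else 0 := by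
    split_ifs
    · rfl
    · simp
  rw [h]
  simp only [Matrix.mulVec, dotProduct, Tmat, Smat, Matrix.of_apply, Fin.ext_iff]
  rw [← Finset.sum_sub_distrib]
  apply Finset.sum_congr rfl
  intro j _
  grind

lemma Smat_ones {N : ℕ} (hN : 2 ≤ N) : Smat N *ᵥ (fun _ => (1 : ℝ)) = 0 := by
  ext i
  rw [Smat_row]
  have h1 : ∀ k, k < N → uu (fun _ : Fin N => (1 : ℝ)) (k + 1) = 1 :=
    fun k hk => uu_succ _ ⟨k, hk⟩
  have h0 := uu_zero (fun _ : Fin N => (1 : ℝ))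
  have hl := uu_last (fun _ : Fin N => (1 : ℝ))
  obtain ⟨i, hi⟩ := i
  simp only [Pi.zero_apply]
  rw [h1 i hi]
  rcases Nat.eq_zero_or_pos i with h | h
  · subst h
    rw [h0, h1 1 (by omega)]
    norm_num
  · obtain ⟨k, rfl⟩ : ∃ k, i = k + 1 := ⟨i - 1, by omega⟩
    rw [h1 k (by omega)]
    by_cases hk : k + 1 = N - 1
    · rw [show k + 1 + 2 = N + 1 by omega, hl, if_pos (Or.inr hk)]
      norm_num
    · rw [h1 (k + 2) (by omega), if_neg (by omega)]
      norm_num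

lemma Smat_sum {N : ℕ} (hN : 2 ≤ N) (z : Fin N → ℝ) :
    (fun _ => (1 : ℝ)) ⬝ᵥ (Smat N *ᵥ z) = 0 := by
  rw [Matrix.dotProduct_mulVec, ← Matrix.mulVec_transpose, Smat_symm, Smat_ones hN,
    zero_dotProduct]

lemma Smat_ker {N : ℕ} (z : Fin N → ℝ) (h : Smat N *ᵥ z = 0) :
    ∀ k, k + 1 < N → uu z (k + 2) = uu z (k + 1) := by
  intro k
  induction k with
  | zero =>
    intro hk
    have := congrFun h ⟨0, by omega⟩
    rw [Smat_row] at this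
    simp [uu_zero] at this
    simp
    linarith
  | succ k ih =>
    intro hk
    have h2 := ih (by omega)
    have := congrFun h ⟨k + 1, by omega⟩
    rw [Smat_row, if_neg (by simp; omega)] at this
    simp only [Pi.zero_apply] at this
    have e : k + 1 + 1 = k + 2 := rfl
    rw [e] at this ⊢
    linarith

lemma inj {N : ℕ} (hN : 2 ≤ N) (x : Fin N → ℝ) (hx : (fun _ => (1 : ℝ)) ⬝ᵥ x = 0)
    (h : (Smat N * Tmat N) *ᵥ x = 0) : x = 0 := by
  rw [← Matrix.mulVec_mulVec] at h
  have hk := Smat_ker _ h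
  set z := Tmat N *ᵥ x with hz
  obtain ⟨c, hc⟩ : ∃ c, c = uu z 1 := ⟨_, rfl⟩
  have hc' : ∀ k, k < N → uu z (k + 1) = c := by
    intro k
    induction k with
    | zero => intro _; exact hc.symm
    | succ k ih => intro hk'; rw [← ih (by omega)]; exact hk k hk'
  have hrec : ∀ k, k < N → 2 * uu x (k + 1) - uu x k - uu x (k + 2) = c := by
    intro k hk'
    rw [← Tmat_row x ⟨k, hk'⟩, ← hc' k hk', ← hz]
    exact (uu_succ z ⟨k, hk'⟩).symm
  obtain ⟨a, ha⟩ : ∃ a, a = uu x 1 := ⟨_, rfl⟩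
  have hf : ∀ k, k ≤ N → uu x k = k * a - c * k * (k - 1) / 2 ∧
      uu x (k + 1) = (k + 1) * a - c * (k + 1) * k / 2 := by
    intro k
    induction k with
    | zero => intro _; simp [uu_zero, ha]
    | succ k ih =>
      intro hk'
      obtain ⟨h1, h2⟩ := ih (by omega)
      have := hrec k (by omega)
      push_cast
      refine ⟨by rw [h2]; ring, ?_⟩
      rw [h1, h2] at this
      rw [show k + 1 + 1 = k + 2 from rfl]
      linear_combination -this
  have hl := (hf N le_rfl).2
  rw [uu_last] at hl
  have hN0 : (N : ℝ) + 1 ≠ 0 := by positivity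
  have ha' : a = c * N / 2 := by
    apply mul_left_cancel₀ hN0
    linear_combination -hl
  have hxi : ∀ i : Fin N, x i = c * (((i : ℝ) + 1) * (N - i) / 2) := by
    intro i
    rw [← uu_succ x i, (hf i i.2.le).2, ha']
    ring
  have hpos : 0 < ∑ i : Fin N, (((i : ℝ) + 1) * (N - i) / 2) := by
    apply Finset.sum_pos
    · intro i _
      have : (i : ℝ) < N := by exact_mod_cast i.2
      have : 0 < (N : ℝ) - i := by linarith
      positivity
    · exact ⟨⟨0, by omega⟩, Finset.mem_univ _⟩
  have hc0 : c = 0 := by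
    simp only [dotProduct, one_mul] at hx
    rw [Finset.sum_congr rfl (fun i _ => hxi i), ← Finset.mul_sum] at hx
    exact (mul_eq_zero.mp hx).resolve_right hpos.ne'
  ext i
  rw [hxi, hc0]
  simp

/-- For every `y` orthogonal to the all-ones vector `e`, there is a unique `x`
orthogonal to `e` with `(S_N T_N) x = y`. -/
theorem SmatTmat_restricted_invertible (N : ℕ) (hN : 2 ≤ N) :
    ∀ y : Fin N → ℝ, (fun _ => (1 : ℝ)) ⬝ᵥ y = 0 →
      ∃! x : Fin N → ℝ,
        (fun _ => (1 : ℝ)) ⬝ᵥ x = 0 ∧ (Smat N * Tmat N).mulVec x = y := by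
  intro y hy
  let V : Submodule ℝ (Fin N → ℝ) :=
    { carrier := {x | (fun _ => (1 : ℝ)) ⬝ᵥ x = 0}
      add_mem' := by
        intro a b ha hb
        simp only [Set.mem_ofPred_eq] at *
        rw [dotProduct_add, ha, hb, add_zero]
      zero_mem' := by simp
      smul_mem' := by
        intro c a ha
        simp only [Set.mem_ofPred_eq] at *
        rw [dotProduct_smul, ha, smul_zero] }
  have hmap : ∀ x ∈ V, (Smat N * Tmat N).mulVecLin x ∈ V := by
    intro x _
    change (fun _ => (1 : ℝ)) ⬝ᵥ ((Smat N * Tmat N) *ᵥ x) = 0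
    rw [← Matrix.mulVec_mulVec]
    exact Smat_sum hN _
  let L : V →ₗ[ℝ] V := (Smat N * Tmat N).mulVecLin.restrict hmap
  have hinj : Function.Injective L := by
    rw [← LinearMap.ker_eq_bot, LinearMap.ker_eq_bot']
    intro m hm
    apply Subtype.ext
    exact inj hN m.1 m.2 (congrArg Subtype.val hm)
  obtain ⟨x, hx⟩ := LinearMap.injective_iff_surjective.mp hinj ⟨y, hy⟩
  refine ⟨x.1, ⟨x.2, congrArg Subtype.val hx⟩, ?_⟩
  rintro w ⟨hw, hwy⟩
  have : L ⟨w, hw⟩ = L x := by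
    rw [hx]
    exact Subtype.ext hwy
  exact congrArg Subtype.val (hinj this)
end

section
/- Let N ≥ 2. Define the (N+2)×N matrix Ŝ_N whose first row is (2, −1, 0, …, 0), whose last row is (0, …, 0, −1, 2), and whose middle N rows form T_N; and define the N×(N+2) matrix T̂_N whose i-th row (1 ≤ i ≤ N) has entries −1, 2, −1 in columns i, i+1, i+2 (columns indexed 1 through N+2) and 0 elsewhere. Let E_N be the N×N matrix with (1,1) and (N,N) entries equal to 1 and all other entries 0. Then T̂_N * Ŝ_N = T_N² − E_N * T_N = S_N * T_N. -/
open Matrix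

/-- The `(N+2) × N` matrix `Ŝ_N`: first row `(2, -1, 0, …, 0)`, last row
`(0, …, 0, -1, 2)`, and the middle `N` rows form `T_N`. -/
noncomputable def Shat (N : ℕ) : Matrix (Fin (N + 2)) (Fin N) ℝ :=
  Matrix.of fun i j =>
    if i.val = 0 then (if j.val = 0 then 2 else if j.val = 1 then -1 else 0)
    else if i.val = N + 1 then
      (if j.val = N - 1 then 2 else if j.val + 1 = N - 1 then -1 else 0)
    else
      (if i.val = j.val + 1 then 2
        else if i.val = j.val + 2 ∨ i.val = j.val then -1 else 0)

/-- The `N × (N+2)` matrix `T̂_N` whose `i`-th row has entries `-1, 2, -1` in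
columns `i, i+1, i+2`. -/
noncomputable def That (N : ℕ) : Matrix (Fin N) (Fin (N + 2)) ℝ :=
  Matrix.of fun i j =>
    if j.val = i.val then -1
    else if j.val = i.val + 1 then 2
    else if j.val = i.val + 2 then -1 else 0

/-- The `N × N` matrix with `(1,1)` and `(N,N)` entries `1` and all other entries `0`. -/
noncomputable def Emat (N : ℕ) : Matrix (Fin N) (Fin N) ℝ :=
  Matrix.of fun i j =>
    if i = j ∧ (i.val = 0 ∨ i.val = N - 1) then 1 else 0

theorem aux_S (N : ℕ) : Smat N = Tmat N - Emat N := by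
  ext i j
  simp only [Smat, Tmat, Emat, Matrix.of_apply, Matrix.sub_apply]
  split_ifs <;> first | (exfalso; tauto) | norm_num

theorem aux_ET (N : ℕ) (i j : Fin N) : (Emat N * Tmat N) i j =
    (if i.val = 0 ∨ i.val = N - 1 then 1 else 0) * Tmat N i j := by
  rw [Matrix.mul_apply, Finset.sum_eq_single i]
  · simp [Emat]
  · intro b _ hb
    simp [Emat, Ne.symm hb]
  · simp

theorem aux_main (N : ℕ) (hN : 2 ≤ N) :
    That N * Shat N = Tmat N ^ 2 - Emat N * Tmat N := by
  ext i j
  rw [Matrix.sub_apply, aux_ET, pow_two, Matrix.mul_apply, Matrix.mul_apply,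
    Fin.sum_univ_succ, Fin.sum_univ_castSucc]
  have hi := i.isLt
  have hj := j.isLt
  have h1 : ∀ k : Fin N, That N i k.castSucc.succ * Shat N k.castSucc.succ j
      = Tmat N i k * Tmat N k j := by
    intro k
    have hk := k.isLt
    have a : That N i k.castSucc.succ = Tmat N i k := by
      simp only [That, Tmat, Matrix.of_apply, Fin.val_succ, Fin.val_castSucc, Fin.ext_iff]
      split_ifs <;> first | rfl | (exfalso; omega)
    have b : Shat N k.castSucc.succ j = Tmat N k j := by
      simp only [Shat, Tmat, Matrix.of_apply, Fin.val_succ, Fin.val_castSucc, Fin.ext_iff]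
      split_ifs <;> first | rfl | (exfalso; omega)
    rw [a, b]
  rw [Finset.sum_congr rfl (fun k _ => h1 k)]
  have h2 : That N i 0 * Shat N 0 j + That N i (Fin.last N).succ * Shat N (Fin.last N).succ j
      = -((if i.val = 0 ∨ i.val = N - 1 then 1 else 0) * Tmat N i j) := by
    simp only [That, Shat, Tmat, Matrix.of_apply, Fin.val_succ, Fin.val_last, Fin.val_zero,
      Fin.ext_iff]
    split_ifs <;> first | (exfalso; omega) | norm_num
  linarith

/-- Identity (21): `T̂_N Ŝ_N = T_N² - E_N T_N = S_N T_N`. -/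
theorem That_mul_Shat (N : ℕ) (hN : 2 ≤ N) :
    That N * Shat N = Tmat N ^ 2 - Emat N * Tmat N ∧
      That N * Shat N = Smat N * Tmat N := by
  refine ⟨aux_main N hN, ?_⟩
  rw [aux_main N hN, aux_S, sub_mul, pow_two]
end

section
/- Let λ₁, λ₂, λ_n be real numbers with 0 < λ₁ < λ₂ < λ_n. Then (λ₁⁻¹ − λ₂⁻¹)/(λ₂⁻¹ − λ_n⁻¹) > (λ₂ − λ₁)/λ₁. -/
/-- The inverse has a better relative spectral gap:
`(λ₁⁻¹ − λ₂⁻¹)/(λ₂⁻¹ − λ_n⁻¹) > (λ₂ − λ₁)/λ₁` for `0 < λ₁ < λ₂ < λ_n`. -/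
theorem inverse_relative_gap (l1 l2 ln : ℝ) (h1 : 0 < l1) (h12 : l1 < l2) (h2n : l2 < ln) :
    (l2 - l1) / l1 < (l1⁻¹ - l2⁻¹) / (l2⁻¹ - ln⁻¹) := by
  have h2 : 0 < l2 := h1.trans h12
  have hn : 0 < ln := h2.trans h2n
  have hd : 0 < l2⁻¹ - ln⁻¹ := sub_pos.mpr (inv_strictAnti₀ h2 h2n)
  rw [lt_div_iff₀ hd]
  have key : l1⁻¹ - l2⁻¹ = (l2 - l1) / l1 * (l2⁻¹ - ln⁻¹) + (l2 - l1) / (l1 * ln) := by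
    field_simp
    ring
  have hp : 0 < (l2 - l1) / (l1 * ln) := div_pos (sub_pos.mpr h12) (mul_pos h1 hn)
  linarith
end
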